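/- Assume μ < 0 and c² < −4(k² + b k). Define s̄ = sup{ ŝ ∈ (0, s₀) : V(s) ≤ 0 for all s ∈ (0, ŝ] } (with s₀ = π in the sphere case and s₀ = ∞ in the hyperbolic case; the assumption c² < −4(k²+bk) guarantees s̄ > 0). Let a₀ > 0 and let s : (0,a₀] → ℝ be twice differentiable, with s(a) ∈ (−π,π) for all a in the sphere case, solving the reduced radial equation (4.24): s″(a) + s′(a)/a − μ Γ(s(a)) + V′(s(a))/a² = 0 on (0,a₀], with lim_{a→0⁺} s(a) = 0 and lim_{a→0⁺} a s′(a) = 0. Then |s(a)| ≤ s̄ for all a ∈ (0,a₀]. -/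

import Mathlib

open Set

/-- `F(s) = ∫₀ˢ Γ`. -/
noncomputable def Ffun (Γ : ℝ → ℝ) (s : ℝ) : ℝ := ∫ t in (0:ℝ)..s, Γ t

/-- `G(s) = (k²/2) Γ(s)² + b k F(s) − k² F(s)²`. -/
noncomputable def Gfun (k b : ℝ) (Γ : ℝ → ℝ) (s : ℝ) : ℝ :=
  k ^ 2 / 2 * (Γ s) ^ 2 + b * k * Ffun Γ s - k ^ 2 * (Ffun Γ s) ^ 2

/-- Sphere case: `P(s) = (1 − cos s)/(1 + cos s)`. -/
noncomputable def Psph (s : ℝ) : ℝ := (1 - Real.cos s) / (1 + Real.cos s)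

/-- Hyperbolic case: `P(s) = (cosh s − 1)/(cosh s + 1)`. -/
noncomputable def Phyp (s : ℝ) : ℝ := (Real.cosh s - 1) / (Real.cosh s + 1)

/-- `V(s) = G(s) + (c²/2) P(s)`. -/
noncomputable def Vfun (k b c : ℝ) (Γ P : ℝ → ℝ) (s : ℝ) : ℝ :=
  Gfun k b Γ s + c ^ 2 / 2 * P s

/-!
Along a solution, the energy `(a s')² / 2 + V(s) + μ a² (M - F(s))` has derivative
`2 μ a (M - F(s))`. Let `a₁` be the first time at which `|s|` reaches a value `v > 0`, and take
`M = F(s(a₁))`. As `F` increases with `|s|`, the energy is nonincreasing on `(0, a₁]`; it tends to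
`V(0) = 0` at the origin and equals `(a₁ s'(a₁))² / 2 + V(v)` at `a₁`, so `V(v) ≤ 0`. Thus `V ≤ 0`
on all of `(0, |s(a)|]`, which is to say that `|s(a)|` competes in the supremum defining `s̄`.
When `s(a) = 0` one needs `s̄ > 0`, which holds because `V / Γ²` tends to
`(4 (k² + b k) + c²) / 8 < 0` at the origin.
-/

open Filter Topology

section FirstHit

variable {α β : Type*} [ConditionallyCompleteLinearOrder α] [DenselyOrdered α] [TopologicalSpace α]
  [OrderTopology α] [LinearOrder β] [TopologicalSpace β] [OrderClosedTopology β]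

lemma exists_first_hit {g : α → β} {a b : α} {v : β} (hab : a ≤ b) (hg : ContinuousOn g (Icc a b))
    (ha : g a < v) (hb : v ≤ g b) : ∃ t ∈ Ioc a b, g t = v ∧ ∀ u ∈ Icc a t, g u ≤ v := by
  have hcompact : IsCompact (Icc a b ∩ g ⁻¹' {v}) :=
    isCompact_Icc.of_isClosed_subset (hg.preimage_isClosed_of_isClosed isClosed_Icc
      isClosed_singleton) inter_subset_left
  obtain ⟨t, ⟨⟨hat, htb⟩, htv : g t = v⟩, hmin⟩ :=
    hcompact.exists_isLeast (intermediate_value_Icc hab hg ⟨ha.le, hb⟩)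
  have hat' : a < t := hat.lt_of_ne (by rintro rfl; exact ha.ne htv)
  refine ⟨t, ⟨hat', htb⟩, htv, fun u ⟨hau, hut⟩ ↦ ?_⟩
  by_contra! hvu
  obtain ⟨w, ⟨haw, hwu⟩, hwv⟩ := intermediate_value_Icc hau
    (hg.mono (Icc_subset_Icc_right (hut.trans htb))) ⟨ha.le, hvu.le⟩
  have htw : t ≤ w := hmin ⟨⟨haw, hwu.trans (hut.trans htb)⟩, hwv⟩
  rw [le_antisymm hut (htw.trans hwu), htv] at hvu
  exact hvu.false

lemma exists_first_hit_of_tendsto {g : α → β} {a b : α} {l v : β} (hab : a < b)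
    (hg : ContinuousOn g (Ioc a b)) (hl : Tendsto g (𝓝[>] a) (𝓝 l)) (hlv : l < v)
    (hb : v ≤ g b) : ∃ t ∈ Ioc a b, g t = v ∧ ∀ u ∈ Ioc a t, g u ≤ v := by
  have hupdate : ∀ {u}, a < u → Function.update g a l u = g u := fun h ↦
    Function.update_of_ne h.ne' _ _
  have hcont : ContinuousOn (Function.update g a l) (Icc a b) := by
    rw [continuousOn_update_iff, Icc_sdiff_left, nhdsWithin_Ioc_eq_nhdsGT hab]
    exact ⟨hg, fun _ ↦ hl⟩
  obtain ⟨t, ht, htv, hle⟩ := exists_first_hit hab.le hcont (by simpa using hlv)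
    (by rwa [hupdate hab])
  refine ⟨t, ht, by rwa [hupdate ht.1] at htv, fun u hu ↦ ?_⟩
  simpa only [hupdate hu.1] using hle u (Ioc_subset_Icc_self hu)

end FirstHit

/-- Solutions `s` on `(0, a₀]` of the reduced radial equation (4.24) that are regular at the origin,
for an arbitrary force `Γ` and potential `V`. -/
structure IsRadialSolution (μ : ℝ) (Γ V s : ℝ → ℝ) (a₀ : ℝ) : Prop where
  differentiableAt : ∀ a ∈ Ioc 0 a₀, DifferentiableAt ℝ s a ∧ DifferentiableAt ℝ (deriv s) a
  ode : ∀ a ∈ Ioc 0 a₀,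
    deriv (deriv s) a + deriv s a / a - μ * Γ (s a) + deriv V (s a) / a ^ 2 = 0
  tendsto : Tendsto s (𝓝[>] 0) (𝓝 0)
  tendsto_mul_deriv : Tendsto (fun a ↦ a * deriv s a) (𝓝[>] 0) (𝓝 0)

/-- The energy of a radial solution `s` at `t`, for a primitive `F` of the force: the Lyapunov
function of the argument. The constant `M` is a bound for `F ∘ s`, which makes it nonincreasing. -/
noncomputable def radialEnergy (μ : ℝ) (F V s : ℝ → ℝ) (M t : ℝ) : ℝ :=
  (t * deriv s t) ^ 2 / 2 + V (s t) + μ * t ^ 2 * (M - F (s t))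

namespace IsRadialSolution

variable {μ a₀ a : ℝ} {Γ F V s : ℝ → ℝ}

lemma mono (h : IsRadialSolution μ Γ V s a₀) (ha : a ≤ a₀) : IsRadialSolution μ Γ V s a where
  differentiableAt t ht := h.differentiableAt t (Ioc_subset_Ioc_right ha ht)
  ode t ht := h.ode t (Ioc_subset_Ioc_right ha ht)
  tendsto := h.tendsto
  tendsto_mul_deriv := h.tendsto_mul_deriv

lemma hasDerivAt_radialEnergy (h : IsRadialSolution μ Γ V s a₀) (M : ℝ) (ha : a ∈ Ioc 0 a₀)
    (hF : HasDerivAt F (Γ (s a)) (s a)) (hV : DifferentiableAt ℝ V (s a)) :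
    HasDerivAt (radialEnergy μ F V s M) (2 * μ * a * (M - F (s a))) a := by
  obtain ⟨hs, hs'⟩ := h.differentiableAt a ha
  have hkin := (((hasDerivAt_id' a).fun_mul hs'.hasDerivAt).fun_pow 2).div_const 2
  have hpot := hV.hasDerivAt.comp a hs.hasDerivAt
  have hforce := (((hasDerivAt_id' a).fun_pow 2).const_mul μ).fun_mul
    ((hF.comp a hs.hasDerivAt).const_sub M)
  have hode : a ^ 2 * deriv (deriv s) a + a * deriv s a - μ * a ^ 2 * Γ (s a)
      + deriv V (s a) = 0 := by
    have ha' := ha.1.ne'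
    have := h.ode a ha
    field_simp at this
    linarith
  refine ((hkin.fun_add hpot).fun_add hforce).congr_deriv ?_
  simp only [Function.comp_apply]
  linear_combination deriv s a * hode

lemma tendsto_radialEnergy (h : IsRadialSolution μ Γ V s a₀) (M : ℝ) (hF : ContinuousAt F 0)
    (hV : ContinuousAt V 0) : Tendsto (radialEnergy μ F V s M) (𝓝[>] 0) (𝓝 (V 0)) := by
  have hid : Tendsto (fun t : ℝ ↦ t) (𝓝[>] 0) (𝓝 0) := tendsto_id.mono_left nhdsWithin_le_nhds
  have hlim : Tendsto (radialEnergy μ F V s M) (𝓝[>] 0)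
      (𝓝 (0 ^ 2 / 2 + V 0 + μ * 0 ^ 2 * (M - F 0))) :=
    (((h.tendsto_mul_deriv.pow 2).div_const 2).add (hV.tendsto.comp h.tendsto)).add
      (((hid.pow 2).const_mul μ).mul ((hF.tendsto.comp h.tendsto).const_sub M))
  simpa using hlim

lemma antitoneOn_radialEnergy (h : IsRadialSolution μ Γ V s a₀) {M : ℝ} (hμ : μ ≤ 0)
    (hF : ∀ x, HasDerivAt F (Γ x) x) (hV : ∀ t ∈ Ioc 0 a₀, DifferentiableAt ℝ V (s t))
    (hM : ∀ t ∈ Ioc 0 a₀, F (s t) ≤ M) : AntitoneOn (radialEnergy μ F V s M) (Ioc 0 a₀) := by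
  have hderiv : ∀ t ∈ Ioc 0 a₀, HasDerivAt (radialEnergy μ F V s M) (2 * μ * t * (M - F (s t))) t :=
    fun t ht ↦ h.hasDerivAt_radialEnergy M ht (hF (s t)) (hV t ht)
  refine antitoneOn_of_hasDerivWithinAt_nonpos (convex_Ioc 0 a₀)
    (fun t ht ↦ (hderiv t ht).continuousAt.continuousWithinAt)
    (fun t ht ↦ (hderiv t (interior_subset ht)).hasDerivWithinAt) fun t ht ↦ ?_
  have ht' := interior_subset ht
  exact mul_nonpos_of_nonpos_of_nonneg (mul_nonpos_of_nonpos_of_nonneg (by linarith) ht'.1.le)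
    (sub_nonneg.2 (hM t ht'))

theorem potential_le_of_forall_le (h : IsRadialSolution μ Γ V s a₀) (hμ : μ ≤ 0) (ha₀ : 0 < a₀)
    (hF : ∀ x, HasDerivAt F (Γ x) x) (hV₀ : ContinuousAt V 0)
    (hV : ∀ t ∈ Ioc 0 a₀, DifferentiableAt ℝ V (s t))
    (hmax : ∀ t ∈ Ioc 0 a₀, F (s t) ≤ F (s a₀)) : V (s a₀) ≤ V 0 := by
  have hanti := h.antitoneOn_radialEnergy hμ hF hV hmax
  calc V (s a₀) ≤ (a₀ * deriv s a₀) ^ 2 / 2 + V (s a₀) := le_add_of_nonneg_left (by positivity)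
    _ = radialEnergy μ F V s (F (s a₀)) a₀ := by simp [radialEnergy]
    _ ≤ V 0 := by
      refine ge_of_tendsto (h.tendsto_radialEnergy (F (s a₀)) (hF 0).continuousAt hV₀) ?_
      filter_upwards [Ioc_mem_nhdsGT ha₀] with t ht
      exact hanti ht (right_mem_Ioc.2 ha₀) ht.2

theorem exists_abs_eq_potential_le (h : IsRadialSolution μ Γ V s a₀) (hμ : μ ≤ 0)
    (hF : ∀ x, HasDerivAt F (Γ x) x) (hV₀ : ContinuousAt V 0)
    (hV : ∀ t ∈ Ioc 0 a₀, DifferentiableAt ℝ V (s t))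
    (hmono : ∀ t ∈ Ioc 0 a₀, ∀ u ∈ Ioc 0 a₀, |s t| ≤ |s u| → F (s t) ≤ F (s u))
    (ha : a ∈ Ioc 0 a₀) {v : ℝ} (hv : v ∈ Ioc 0 |s a|) :
    ∃ t ∈ Ioc 0 a₀, |s t| = v ∧ V (s t) ≤ V 0 := by
  have hcont : ContinuousOn (fun t ↦ |s t|) (Ioc 0 a) := fun t ht ↦
    ((h.mono ha.2).differentiableAt t ht).1.continuousAt.abs.continuousWithinAt
  obtain ⟨t, ht, rfl, hle⟩ := exists_first_hit_of_tendsto ha.1 hcont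
    (by simpa using h.tendsto.abs) hv.1 hv.2
  have hta₀ := ht.2.trans ha.2
  have hsub : Ioc 0 t ⊆ Ioc 0 a₀ := Ioc_subset_Ioc_right hta₀
  exact ⟨t, ⟨ht.1, hta₀⟩, rfl, (h.mono hta₀).potential_le_of_forall_le hμ ht.1 hF hV₀
    (fun u hu ↦ hV u (hsub hu)) fun u hu ↦ hmono u (hsub hu) t ⟨ht.1, hta₀⟩ (hle u hu)⟩

end IsRadialSolution

lemma div_eq_sq_div_mul {K : Type*} [Field K] (u w : K) : u / w = u ^ 2 / (u * w) := by
  rcases eq_or_ne u 0 with rfl | hu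
  · simp
  · rw [sq, mul_div_mul_left _ _ hu]

lemma map_abs_of_even {α β : Type*} [AddGroup α] [LinearOrder α] {f : α → β} (hf : f.Even) (x : α) :
    f |x| = f x := by
  rcases abs_choice x with hx | hx
  · rw [hx]
  · rw [hx, hf]

lemma eventually_abs_coe_lt {x : ℝ} {r : EReal} (hx : ((|x| : ℝ) : EReal) < r) :
    ∀ᶠ y : ℝ in 𝓝 x, ((|y| : ℝ) : EReal) < r :=
  (continuous_coe_real_ereal.comp continuous_abs).continuousAt.eventually_lt_const hx

section Primitive

variable {Γ : ℝ → ℝ}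

@[simp] lemma Ffun_zero (Γ : ℝ → ℝ) : Ffun Γ 0 = 0 := intervalIntegral.integral_same

lemma hasDerivAt_Ffun (hΓ : Continuous Γ) (x : ℝ) : HasDerivAt (Ffun Γ) (Γ x) x :=
  (hΓ.integral_hasStrictDerivAt 0 x).hasDerivAt

lemma even_Ffun (hΓ : Γ.Odd) : (Ffun Γ).Even := fun x ↦ by
  have h := intervalIntegral.integral_comp_neg (a := 0) (b := x) Γ
  simp only [hΓ _, intervalIntegral.integral_neg, neg_zero] at h
  rw [Ffun, intervalIntegral.integral_symm, ← h, neg_neg, Ffun]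

lemma tendsto_Ffun_div_sq {m : ℝ} (hΓ : Continuous Γ) (hΓ₀ : Γ 0 = 0) (hm : HasDerivAt Γ m 0) :
    Tendsto (fun x ↦ Ffun Γ x / x ^ 2) (𝓝[≠] 0) (𝓝 (m / 2)) := by
  have hslope : Tendsto (fun x ↦ Γ x / (2 * x)) (𝓝[≠] 0) (𝓝 (m / 2)) := by
    refine (hm.tendsto_slope.div_const 2).congr fun x ↦ ?_
    rw [slope_def_field, hΓ₀, sub_zero, sub_zero, div_div, mul_comm]
  have hF : Tendsto (Ffun Γ) (𝓝[≠] 0) (𝓝 0) := by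
    simpa using (hasDerivAt_Ffun hΓ 0).continuousAt.tendsto.mono_left nhdsWithin_le_nhds
  have hsq : Tendsto (fun x : ℝ ↦ x ^ 2) (𝓝[≠] 0) (𝓝 0) := by
    simpa using ((continuous_pow 2).tendsto (0 : ℝ)).mono_left nhdsWithin_le_nhds
  refine HasDerivAt.lhopital_zero_nhdsNE (.of_forall (hasDerivAt_Ffun hΓ))
    (.of_forall fun x ↦ by simpa using hasDerivAt_pow 2 x) ?_ hF hsq hslope
  filter_upwards [self_mem_nhdsWithin] with x hx
  exact mul_ne_zero two_ne_zero hx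

end Primitive

/-- `Γ` is the warping function of a rotationally symmetric surface with metric `ds² + Γ(s)² dθ²`
and radius `s₀`, and `P` is the extension of `F² / Γ²` to `(-s₀, s₀)`. It treats the sphere and the
hyperbolic plane at once. Since `0 / 0 = 0`, `eq_div` includes `P 0 = 0`. -/
structure IsRotationProfile (Γ P : ℝ → ℝ) (s₀ : EReal) : Prop where
  differentiable : Differentiable ℝ Γ
  odd : Γ.Odd
  hasDerivAt_zero : HasDerivAt Γ 1 0
  radius_pos : 0 < s₀
  pos : ∀ x : ℝ, 0 < x → (x : EReal) < s₀ → 0 < Γ x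
  eq_div : ∀ x : ℝ, ((|x| : ℝ) : EReal) < s₀ → P x = Ffun Γ x ^ 2 / Γ x ^ 2

/-- The radii below `s₀` up to which `V` is nonpositive; their supremum is `s̄`. -/
def nonposRadii (V : ℝ → ℝ) (s₀ : EReal) : Set ℝ :=
  {r | 0 < r ∧ (r : EReal) < s₀ ∧ ∀ x ∈ Ioc 0 r, V x ≤ 0}

namespace IsRotationProfile

variable {Γ P : ℝ → ℝ} {s₀ : EReal} {x y : ℝ}

lemma map_zero (h : IsRotationProfile Γ P s₀) : Γ 0 = 0 := h.odd.map_zero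

lemma ne_zero (h : IsRotationProfile Γ P s₀) (hx : ((|x| : ℝ) : EReal) < s₀) (hx₀ : x ≠ 0) :
    Γ x ≠ 0 := by
  have hpos := h.pos |x| (abs_pos.2 hx₀) hx
  rcases abs_choice x with hx' | hx' <;> rw [hx'] at hpos
  · exact hpos.ne'
  · rw [h.odd x] at hpos
    exact (neg_pos.1 hpos).ne

lemma abs_zero_lt (h : IsRotationProfile Γ P s₀) : ((|0| : ℝ) : EReal) < s₀ := by
  simpa using h.radius_pos

lemma Ffun_le_Ffun (h : IsRotationProfile Γ P s₀) (hy : ((|y| : ℝ) : EReal) < s₀)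
    (hxy : |x| ≤ |y|) : Ffun Γ x ≤ Ffun Γ y := by
  have habs : ∀ z, Ffun Γ |z| = Ffun Γ z := fun z ↦ map_abs_of_even (even_Ffun h.odd) z
  rw [← habs x, ← habs y]
  refine intervalIntegral.integral_mono_interval le_rfl (abs_nonneg x) hxy ?_
    (h.differentiable.continuous.intervalIntegrable _ _)
  refine (MeasureTheory.ae_restrict_mem measurableSet_Ioc).mono fun t ht ↦ ?_
  exact (h.pos t ht.1 ((EReal.coe_le_coe_iff.2 ht.2).trans_lt hy)).le

lemma tendsto_Ffun_div_sq (h : IsRotationProfile Γ P s₀) :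
    Tendsto (fun x ↦ Ffun Γ x / Γ x ^ 2) (𝓝[≠] 0) (𝓝 (1 / 2)) := by
  have hslope := h.hasDerivAt_zero.tendsto_slope.pow 2
  have hF := _root_.tendsto_Ffun_div_sq h.differentiable.continuous h.map_zero h.hasDerivAt_zero
  have hdiv := hF.div hslope (by norm_num)
  rw [one_pow, div_one] at hdiv
  refine hdiv.congr' ?_
  filter_upwards [self_mem_nhdsWithin] with x (hx : x ≠ 0)
  simp only [Pi.div_apply, slope_def_field, h.map_zero, sub_zero]
  field_simp

lemma hasDerivAt_P_zero (h : IsRotationProfile Γ P s₀) : HasDerivAt P 0 0 := by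
  rw [hasDerivAt_iff_tendsto_slope]
  have hΓ : Tendsto Γ (𝓝[≠] 0) (𝓝 0) := by
    simpa [h.map_zero] using h.hasDerivAt_zero.continuousAt.tendsto.mono_left nhdsWithin_le_nhds
  have hlim := ((h.tendsto_Ffun_div_sq.pow 2).mul hΓ).mul h.hasDerivAt_zero.tendsto_slope
  rw [mul_zero, zero_mul] at hlim
  refine hlim.congr' ?_
  filter_upwards [self_mem_nhdsWithin, (eventually_abs_coe_lt h.abs_zero_lt).filter_mono
    nhdsWithin_le_nhds] with x (hx₀ : x ≠ 0) hx
  have hΓx := h.ne_zero hx hx₀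
  simp only [slope_def_field, h.eq_div x hx, h.eq_div 0 h.abs_zero_lt, h.map_zero, Ffun_zero]
  field_simp
  ring

lemma differentiableAt_P (h : IsRotationProfile Γ P s₀) (hx : ((|x| : ℝ) : EReal) < s₀) :
    DifferentiableAt ℝ P x := by
  rcases eq_or_ne x 0 with rfl | hx₀
  · exact h.hasDerivAt_P_zero.differentiableAt
  · have hF := (hasDerivAt_Ffun h.differentiable.continuous x).differentiableAt
    have hdiv := (hF.fun_pow 2).fun_div ((h.differentiable x).fun_pow 2)
      (pow_ne_zero 2 (h.ne_zero hx hx₀))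
    exact hdiv.congr_of_eventuallyEq ((eventually_abs_coe_lt hx).mono h.eq_div)

variable (k b c : ℝ)

lemma differentiableAt_Vfun (h : IsRotationProfile Γ P s₀) (hx : ((|x| : ℝ) : EReal) < s₀) :
    DifferentiableAt ℝ (Vfun k b c Γ P) x := by
  have hF := (hasDerivAt_Ffun h.differentiable.continuous x).differentiableAt
  have hΓ := h.differentiable x
  have hP := h.differentiableAt_P hx
  unfold Vfun Gfun
  fun_prop

lemma Vfun_zero (h : IsRotationProfile Γ P s₀) : Vfun k b c Γ P 0 = 0 := by
  simp [Vfun, Gfun, h.map_zero, h.eq_div 0 h.abs_zero_lt]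

lemma Vfun_abs (h : IsRotationProfile Γ P s₀) (hx : ((|x| : ℝ) : EReal) < s₀) :
    Vfun k b c Γ P |x| = Vfun k b c Γ P x := by
  have hF : Ffun Γ |x| = Ffun Γ x := map_abs_of_even (even_Ffun h.odd) x
  have hΓ : Γ |x| ^ 2 = Γ x ^ 2 := map_abs_of_even (f := fun y ↦ Γ y ^ 2)
    (fun y ↦ by simp only [h.odd y, neg_sq]) x
  simp only [Vfun, Gfun, h.eq_div x hx, h.eq_div |x| (by rwa [abs_abs]), hF, hΓ]

lemma tendsto_Vfun_div_sq (h : IsRotationProfile Γ P s₀) :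
    Tendsto (fun x ↦ Vfun k b c Γ P x / Γ x ^ 2) (𝓝[≠] 0)
      (𝓝 ((4 * (k ^ 2 + b * k) + c ^ 2) / 8)) := by
  have hq := h.tendsto_Ffun_div_sq
  have hF : Tendsto (Ffun Γ) (𝓝[≠] 0) (𝓝 0) := by
    simpa using (hasDerivAt_Ffun h.differentiable.continuous 0).continuousAt.tendsto.mono_left
      nhdsWithin_le_nhds
  have hlim := (((hq.const_mul (b * k)).const_add (k ^ 2 / 2)).sub
    ((hq.const_mul (k ^ 2)).mul hF)).add ((hq.pow 2).const_mul (c ^ 2 / 2))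
  convert hlim.congr' ?_ using 2
  · ring
  · filter_upwards [self_mem_nhdsWithin, (eventually_abs_coe_lt h.abs_zero_lt).filter_mono
      nhdsWithin_le_nhds] with x (hx₀ : x ≠ 0) hx
    have hΓx := h.ne_zero hx hx₀
    simp only [Vfun, Gfun, h.eq_div x hx]
    field_simp

variable {k b c}

theorem nonposRadii_nonempty (h : IsRotationProfile Γ P s₀) (hb : c ^ 2 < -4 * (k ^ 2 + b * k)) :
    (nonposRadii (Vfun k b c Γ P) s₀).Nonempty := by
  have hneg := (h.tendsto_Vfun_div_sq k b c).eventually_lt_const (u := 0) (by linarith)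
  have hball := (eventually_abs_coe_lt h.abs_zero_lt).filter_mono
    (nhdsWithin_le_nhds (s := Ioi (0 : ℝ)))
  obtain ⟨r, hr, hsub⟩ := mem_nhdsGT_iff_exists_Ioc_subset.1
    ((hneg.filter_mono (nhdsWithin_mono _ fun x (hx : 0 < x) ↦ hx.ne')).and hball)
  have hr₀ : 0 < r := hr
  refine ⟨r, hr₀, by simpa [abs_of_pos hr₀] using (hsub ⟨hr₀, le_rfl⟩).2, fun x hx ↦ ?_⟩
  by_contra! hpos
  exact (hsub hx).1.not_ge (by positivity)

theorem abs_mem_nonposRadii (h : IsRotationProfile Γ P s₀) {μ a₀ : ℝ} {s : ℝ → ℝ} (hμ : μ ≤ 0)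
    (hs : IsRadialSolution μ Γ (Vfun k b c Γ P) s a₀)
    (hrange : ∀ a ∈ Ioc 0 a₀, ((|s a| : ℝ) : EReal) < s₀) {a : ℝ} (ha : a ∈ Ioc 0 a₀)
    (hsa : s a ≠ 0) : |s a| ∈ nonposRadii (Vfun k b c Γ P) s₀ := by
  refine ⟨abs_pos.2 hsa, hrange a ha, fun v hv ↦ ?_⟩
  obtain ⟨t, ht, rfl, hle⟩ := hs.exists_abs_eq_potential_le hμ
    (hasDerivAt_Ffun h.differentiable.continuous)
    (h.differentiableAt_Vfun k b c h.abs_zero_lt).continuousAt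
    (fun t ht ↦ h.differentiableAt_Vfun k b c (hrange t ht))
    (fun t _ u hu ↦ h.Ffun_le_Ffun (hrange u hu)) ha hv
  rwa [h.Vfun_abs k b c (hrange t ht), ← h.Vfun_zero k b c]

end IsRotationProfile

lemma Ffun_sin (x : ℝ) : Ffun Real.sin x = 1 - Real.cos x := by simp [Ffun]

lemma Ffun_sinh (x : ℝ) : Ffun Real.sinh x = Real.cosh x - 1 := by
  rw [Ffun, intervalIntegral.integral_eq_sub_of_hasDerivAt (fun t _ ↦ Real.hasDerivAt_cosh t)
    (Real.continuous_sinh.intervalIntegrable _ _), Real.cosh_zero]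

theorem isRotationProfile_sin : IsRotationProfile Real.sin Psph (Real.pi : ℝ) where
  differentiable := Real.differentiable_sin
  odd := Real.sin_neg
  hasDerivAt_zero := by simpa using Real.hasDerivAt_sin 0
  radius_pos := EReal.coe_pos.2 Real.pi_pos
  pos _ hx hxπ := Real.sin_pos_of_pos_of_lt_pi hx (EReal.coe_lt_coe_iff.1 hxπ)
  eq_div x _ := by
    have hsq : Real.sin x ^ 2 = (1 - Real.cos x) * (1 + Real.cos x) := by
      rw [Real.sin_sq]; ring
    rw [Ffun_sin, hsq, ← div_eq_sq_div_mul, Psph]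

theorem isRotationProfile_sinh : IsRotationProfile Real.sinh Phyp ⊤ where
  differentiable := Real.differentiable_sinh
  odd := Real.sinh_neg
  hasDerivAt_zero := by simpa using Real.hasDerivAt_sinh 0
  radius_pos := EReal.zero_lt_top
  pos _ hx _ := Real.sinh_pos_iff.2 hx
  eq_div x _ := by
    have hsq : Real.sinh x ^ 2 = (Real.cosh x - 1) * (Real.cosh x + 1) := by
      rw [Real.sinh_sq]; ring
    rw [Ffun_sinh, hsq, ← div_eq_sq_div_mul, Phyp]

theorem stmt7_general {k b c μ a₀ : ℝ} {Γ P s : ℝ → ℝ} {s₀ : EReal}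
    (hΓ : IsRotationProfile Γ P s₀) (hμ : μ ≤ 0)
    (hne : (nonposRadii (Vfun k b c Γ P) s₀).Nonempty)
    (hs : IsRadialSolution μ Γ (Vfun k b c Γ P) s a₀)
    (hrange : ∀ a ∈ Ioc 0 a₀, ((|s a| : ℝ) : EReal) < s₀) :
    ∀ a ∈ Ioc 0 a₀, ((|s a| : ℝ) : EReal) ≤
      sSup ((fun x : ℝ ↦ (x : EReal)) '' nonposRadii (Vfun k b c Γ P) s₀) := by
  intro a ha
  rcases eq_or_ne (s a) 0 with hsa | hsa
  · obtain ⟨r, hr⟩ := hne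
    rw [hsa, abs_zero]
    exact (EReal.coe_le_coe_iff.2 hr.1.le).trans (le_sSup (mem_image_of_mem _ hr))
  · exact le_sSup (mem_image_of_mem _ (hΓ.abs_mem_nonposRadii hμ hs hrange ha hsa))

/-- For `μ < 0` and `c² < −4(k² + bk)`: any solution of the reduced radial equation
(4.24) on `(0,a₀]` with `s → 0` and `a s′ → 0` as `a → 0⁺` satisfies `|s(a)| ≤ s̄`,
where `s̄ = sup{shat ∈ (0,s₀) : V ≤ 0 on (0,shat]}` (as an extended real,
`s₀ = π` on `S²` and `s₀ = ∞` on `H²`). -/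
theorem stmt7 (k b c μ : ℝ) (Γ P : ℝ → ℝ) (s₀ : EReal)
    (hcase : (Γ = Real.sin ∧ P = Psph ∧ s₀ = ((Real.pi : ℝ) : EReal)) ∨
      (Γ = Real.sinh ∧ P = Phyp ∧ s₀ = ⊤))
    (hμ : μ < 0) (hb : c ^ 2 < -4 * (k ^ 2 + b * k))
    (a₀ : ℝ) (ha₀ : 0 < a₀) (s : ℝ → ℝ)
    (hdiff : ∀ a ∈ Ioc (0:ℝ) a₀, DifferentiableAt ℝ s a ∧ DifferentiableAt ℝ (deriv s) a)
    (hrange : Γ = Real.sin → ∀ a ∈ Ioc (0:ℝ) a₀, s a ∈ Ioo (-Real.pi) Real.pi)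
    (hode : ∀ a ∈ Ioc (0:ℝ) a₀,
      deriv (deriv s) a + deriv s a / a - μ * Γ (s a)
        + deriv (Vfun k b c Γ P) (s a) / a ^ 2 = 0)
    (hlim0 : Filter.Tendsto s (nhdsWithin 0 (Ioi 0)) (nhds 0))
    (hlim1 : Filter.Tendsto (fun a => a * deriv s a) (nhdsWithin 0 (Ioi 0)) (nhds 0)) :
    ∀ a ∈ Ioc (0:ℝ) a₀,
      ((abs (s a) : ℝ) : EReal) ≤
        sSup ((fun x : ℝ => (x : EReal)) ''
          {shat : ℝ | 0 < shat ∧ (shat : EReal) < s₀ ∧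
            ∀ s' ∈ Ioc (0:ℝ) shat, Vfun k b c Γ P s' ≤ 0}) := by
  rcases hcase with ⟨rfl, rfl, rfl⟩ | ⟨rfl, rfl, rfl⟩
  · exact stmt7_general isRotationProfile_sin hμ.le
      (isRotationProfile_sin.nonposRadii_nonempty hb) ⟨hdiff, hode, hlim0, hlim1⟩
      fun a ha ↦ EReal.coe_lt_coe_iff.2 (abs_lt.2 (hrange rfl a ha))
  · exact stmt7_general isRotationProfile_sinh hμ.le
      (isRotationProfile_sinh.nonposRadii_nonempty hb) ⟨hdiff, hode, hlim0, hlim1⟩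
      fun _ _ ↦ EReal.coe_lt_top _
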